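/- Let φ be integrable on 𝕋, n ≥ 1, and D_n[φ] ≠ 0. Define the monic degree-n polynomial X₁₁(z;n) := (1/D_n[φ])·det of the (n+1)×(n+1) matrix with (i,j)-entry φ_{i−j} for 0≤i≤n−1, 0≤j≤n, and last row (1, z, ..., z^n), and for |z|<1 define X₁₂(z;n) := ∮_𝕋 X₁₁(ζ;n) ζ^{−n} φ(ζ)/(ζ−z) dζ/(2πi). Then for every integer ℓ ≥ 1: D^B_{n+1}[φ; z^{−ℓ}φ] = (D_n[φ]/ℓ!) · (d^ℓ/dz^ℓ) X₁₂(z;n) evaluated at z = 0, where z^{−ℓ}φ denotes the function z ↦ z^{−ℓ}φ(z), whose Fourier coefficients are (z^{−ℓ}φ)_j = φ_{j+ℓ}. -/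

import Mathlib

/-!
The function `X₁₂(·;n)` is the Cauchy integral of `ζ ↦ X₁₁(ζ;n) ζ⁻ⁿ φ(ζ)` over the unit circle, so
its `ℓ`-th Taylor coefficient at `0` is `(2πi)⁻¹ ∮ ζ^(-ℓ-1) X₁₁(ζ;n) ζ⁻ⁿ φ(ζ) dζ`
(`iteratedDeriv_cauchy_integral`). The determinant defining `X₁₁` is linear in its last row
(`det_lastRow`), so the integration may be carried out inside that row: the entry `ζ ^ j` turns into
the Fourier coefficient `φ_{n+ℓ-j}`. The resulting matrix is the transpose of the one that defines
the bordered determinant `D^B_{n+1}[φ; z^{-ℓ}φ]`.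
-/

open Complex Matrix Filter

/-- The `j`-th Fourier coefficient of a function on the unit circle:
`f_j = (1/(2πi)) ∮ f(ζ) ζ^{-j} dζ/ζ`. -/
noncomputable def fc (f : ℂ → ℂ) (j : ℤ) : ℂ :=
  (2 * (Real.pi : ℂ) * Complex.I)⁻¹ * ∮ ζ in C(0, 1), ζ ^ (-j - 1) * f ζ

/-- The `n × n` Toeplitz determinant `D_n[φ]`, with `D_0[φ] = 1`. -/
noncomputable def toeplitzDet (φ : ℂ → ℂ) (n : ℕ) : ℂ :=
  (Matrix.of fun j k : Fin n => fc φ ((j : ℤ) - (k : ℤ))).det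

/-- The bordered Toeplitz determinant `D^B_n[φ;ψ]`. -/
noncomputable def borderedDet (φ ψ : ℂ → ℂ) (n : ℕ) : ℂ :=
  (Matrix.of fun j k : Fin n =>
    if (k : ℕ) = n - 1 then fc ψ ((n : ℤ) - 1 - (j : ℤ))
    else fc φ ((k : ℤ) - (j : ℤ))).det

/-- The monic polynomial `X₁₁(z;n) = D_n[φ]⁻¹ det` of the `(n+1)×(n+1)` matrix with
rows of Fourier coefficients `φ_{i-j}` and last row `(1, z, …, z^n)`. -/
noncomputable def rhpX11 (φ : ℂ → ℂ) (n : ℕ) (z : ℂ) : ℂ :=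
  (toeplitzDet φ n)⁻¹ * (Matrix.of fun i j : Fin (n + 1) =>
    if (i : ℕ) = n then z ^ (j : ℕ) else fc φ ((i : ℤ) - (j : ℤ))).det

/-- The cofactor of the entry `j` of the last row in a matrix whose first `n` rows are
`(φ_{i-j})`; it does not depend on the last row. -/
noncomputable def lastRowCofactor (φ : ℂ → ℂ) (n : ℕ) (j : Fin (n + 1)) : ℂ :=
  (-1) ^ (n + (j : ℕ)) *
    (Matrix.of fun i k : Fin n => fc φ ((i : ℤ) - ((j.succAbove k : Fin (n + 1)) : ℤ))).det

lemma det_lastRow (φ : ℂ → ℂ) (n : ℕ) (v : Fin (n + 1) → ℂ) :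
    (Matrix.of fun i j : Fin (n + 1) =>
      if (i : ℕ) = n then v j else fc φ ((i : ℤ) - (j : ℤ))).det
      = ∑ j, lastRowCofactor φ n j * v j := by
  rw [Matrix.det_succ_row _ (Fin.last n)]
  refine Finset.sum_congr rfl fun j _ => ?_
  have hminor : (Matrix.of fun i j : Fin (n + 1) =>
      if (i : ℕ) = n then v j else fc φ ((i : ℤ) - (j : ℤ))).submatrix
        (Fin.last n).succAbove j.succAbove
      = Matrix.of fun i k : Fin n => fc φ ((i : ℤ) - ((j.succAbove k : Fin (n + 1)) : ℤ)) := by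
    ext i k
    simp [i.isLt.ne]
  rw [hminor, lastRowCofactor]
  simp only [Matrix.of_apply, Fin.val_last, if_true]
  ring

lemma circleIntegrable_zpow_mul {φ : ℂ → ℂ} (hφ : CircleIntegrable φ 0 1) (m : ℤ) :
    CircleIntegrable (fun ζ => ζ ^ m * φ ζ) 0 1 := by
  refine hφ.continuousOn_mul (g := fun ζ => ζ ^ m) ?_
  refine continuousOn_id.zpow₀ m fun ζ hζ => Or.inl ?_
  rintro rfl
  simp at hζ

/-- Derivatives at the centre of a Cauchy integral over the unit circle; the density need only be
integrable. -/
lemma iteratedDeriv_cauchy_integral {f : ℂ → ℂ} (hf : CircleIntegrable f 0 1) (ℓ : ℕ) :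
    iteratedDeriv ℓ (fun z => (2 * (Real.pi : ℂ) * Complex.I)⁻¹
        * ∮ ζ in C(0, 1), f ζ / (ζ - z)) 0
      = (Nat.factorial ℓ : ℂ) * ((2 * (Real.pi : ℂ) * Complex.I)⁻¹
        * ∮ ζ in C(0, 1), ζ⁻¹ ^ ℓ * (ζ⁻¹ * f ζ)) := by
  have h := hasFPowerSeriesOn_cauchy_integral (f := f) (c := 0) (R := 1)
    (by simpa using hf) one_pos
  have h2 := h.factorial_smul 1 ℓ
  rw [cauchyPowerSeries_apply] at h2
  simp only [NNReal.coe_one, smul_eq_mul, sub_zero, one_div, nsmul_eq_mul] at h2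
  rw [h2, iteratedDeriv_eq_iteratedFDeriv]
  simp only [div_eq_inv_mul]

/-- Theorem 2.10: `X₁₂(z;n)` is the generating function of the bordered Toeplitz
determinants `D^B_{n+1}[φ; z^{-ℓ} φ] / D_n[φ]`. -/
theorem borderedDet_zpow_phi_eq_deriv_X12
    (φ : ℂ → ℂ) (hφ : CircleIntegrable φ 0 1) (n : ℕ) (hn : 1 ≤ n)
    (hD : toeplitzDet φ n ≠ 0) (ℓ : ℕ) (hℓ : 1 ≤ ℓ) :
    borderedDet φ (fun z => z ^ (-(ℓ : ℤ)) * φ z) (n + 1)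
      = toeplitzDet φ n / (Nat.factorial ℓ : ℂ)
        * iteratedDeriv ℓ (fun z => (2 * (Real.pi : ℂ) * Complex.I)⁻¹
            * ∮ ζ in C(0, 1), rhpX11 φ n ζ * ζ ^ (-(n : ℤ)) * φ ζ / (ζ - z)) 0 := by
  -- The density of the Cauchy integral, expanded along the last row of the determinant.
  have hdens : ∀ ζ ∈ Metric.sphere (0 : ℂ) 1, ∀ m : ℤ,
      ζ ^ m * (rhpX11 φ n ζ * ζ ^ (-(n : ℤ)) * φ ζ)
        = ∑ j : Fin (n + 1), ((toeplitzDet φ n)⁻¹ * lastRowCofactor φ n j)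
            * (ζ ^ (m - n + (j : ℕ)) * φ ζ) := by
    intro ζ hζ m
    have hζ0 : ζ ≠ 0 := by
      rintro rfl
      simp at hζ
    rw [rhpX11, det_lastRow φ n fun j => ζ ^ (j : ℕ), Finset.mul_sum, Finset.sum_mul,
      Finset.sum_mul, Finset.mul_sum]
    refine Finset.sum_congr rfl fun j _ => ?_
    rw [zpow_add₀ hζ0, zpow_sub₀ hζ0, _root_.zpow_neg, zpow_natCast, zpow_natCast]
    ring
  have hterm : ∀ (m : ℤ) (j : Fin (n + 1)), CircleIntegrable (fun ζ =>
      ((toeplitzDet φ n)⁻¹ * lastRowCofactor φ n j) * (ζ ^ (m - n + (j : ℕ)) * φ ζ)) 0 1 :=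
    fun m j => (circleIntegrable_zpow_mul hφ (m - n + (j : ℕ))).const_smul
  have hint : CircleIntegrable (fun ζ => rhpX11 φ n ζ * ζ ^ (-(n : ℤ)) * φ ζ) 0 1 := by
    refine (CircleIntegrable.sum Finset.univ fun j _ => hterm 0 j).congr ?_
    intro θ _
    have := hdens (circleMap 0 1 θ) (by simp) 0
    simp only [zpow_zero, one_mul] at this
    simp only [Finset.sum_apply]
    exact this.symm
  rw [iteratedDeriv_cauchy_integral hint]
  have hcoeff : (∮ ζ in C(0, 1), ζ⁻¹ ^ ℓ * (ζ⁻¹ * (rhpX11 φ n ζ * ζ ^ (-(n : ℤ)) * φ ζ)))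
      = ∑ j : Fin (n + 1), ((toeplitzDet φ n)⁻¹ * lastRowCofactor φ n j)
          * ∮ ζ in C(0, 1), ζ ^ (-((n : ℤ) + ℓ - (j : ℕ)) - 1) * φ ζ := by
    rw [circleIntegral.integral_congr zero_le_one
      (g := fun ζ => ∑ j : Fin (n + 1), ((toeplitzDet φ n)⁻¹ * lastRowCofactor φ n j)
        * (ζ ^ ((-(ℓ : ℤ) - 1) - n + (j : ℕ)) * φ ζ)),
      circleIntegral.integral_fun_sum fun j _ => hterm _ j]
    · refine Finset.sum_congr rfl fun j _ => ?_
      rw [circleIntegral.integral_const_mul,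
        show (-(ℓ : ℤ) - 1) - n + (j : ℕ) = -((n : ℤ) + ℓ - (j : ℕ)) - 1 by ring]
    · intro ζ hζ
      have hζ0 : ζ ≠ 0 := by
        rintro rfl
        simp at hζ
      simp only
      rw [← hdens ζ hζ, zpow_sub₀ hζ0, _root_.zpow_neg ζ (ℓ : ℤ), zpow_natCast ζ ℓ, zpow_one, inv_pow]
      ring
  -- `D^B` is the transpose of the matrix with last row `φ_{n+ℓ-j}`.
  have hB : borderedDet φ (fun z => z ^ (-(ℓ : ℤ)) * φ z) (n + 1)
      = ∑ j : Fin (n + 1), lastRowCofactor φ n j * fc φ ((n : ℤ) + ℓ - (j : ℕ)) := by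
    rw [← det_lastRow φ n fun j => fc φ ((n : ℤ) + ℓ - (j : ℕ)), borderedDet,
      ← Matrix.det_transpose]
    congr 1
    ext i j
    simp only [Matrix.transpose_apply, Matrix.of_apply, Nat.add_sub_cancel]
    refine if_congr Iff.rfl ?_ rfl
    rw [fc, fc]
    congr 1
    refine circleIntegral.integral_congr zero_le_one fun ζ hζ => ?_
    have hζ0 : ζ ≠ 0 := by
      rintro rfl
      simp at hζ
    rw [← mul_assoc, ← zpow_add₀ hζ0]
    congr 2
    push_cast
    ring
  have hfact : (Nat.factorial ℓ : ℂ) ≠ 0 := Nat.cast_ne_zero.mpr ℓ.factorial_ne_zero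
  rw [hB, hcoeff, ← mul_assoc, div_mul_cancel₀ _ hfact, Finset.mul_sum, Finset.mul_sum]
  refine Finset.sum_congr rfl fun j _ => ?_
  rw [fc, mul_assoc (toeplitzDet φ n)⁻¹, mul_left_comm _ (toeplitzDet φ n)⁻¹,
    mul_inv_cancel_left₀ hD]
  ring
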